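/- The half-graphon W_h, defined by W_h(x,y) = 1 if x + y ≤ 1 and W_h(x,y) = 0 otherwise, is finitely forcible in 𝒲. -/

import Mathlib

open MeasureTheory
open scoped Classical

noncomputable section

/-- The unit interval `[0,1]` as a subset of `ℝ`. -/
def I01 : Set ℝ := Set.Icc 0 1

/-- The cube `[0,1]^n`. -/
def cube (n : ℕ) : Set (Fin n → ℝ) := Set.univ.pi fun _ => I01

/-- `W` belongs to `𝒲`: a bounded symmetric measurable function on `[0,1]²`. -/
def memW (W : ℝ → ℝ → ℝ) : Prop :=
  Measurable (Function.uncurry W) ∧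
  (∀ x ∈ I01, ∀ y ∈ I01, W x y = W y x) ∧
  ∃ C : ℝ, ∀ x ∈ I01, ∀ y ∈ I01, |W x y| ≤ C

/-- `W` belongs to `𝒲₀`: a graphon, i.e. symmetric measurable with values in `[0,1]`. -/
def memW0 (W : ℝ → ℝ → ℝ) : Prop :=
  Measurable (Function.uncurry W) ∧
  (∀ x ∈ I01, ∀ y ∈ I01, W x y = W y x) ∧
  ∀ x ∈ I01, ∀ y ∈ I01, W x y ∈ Set.Icc (0 : ℝ) 1

/-- Homomorphism density `t(F,W)` of a finite simple graph `F` in `W`. -/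
def homDensity {n : ℕ} (F : SimpleGraph (Fin n)) (W : ℝ → ℝ → ℝ) : ℝ :=
  ∫ x in cube n,
    ∏ p ∈ Finset.univ.filter (fun p : Fin n × Fin n => p.1 < p.2 ∧ F.Adj p.1 p.2),
      W (x p.1) (x p.2)

/-- Two kernels are weakly isomorphic if all their homomorphism densities agree. -/
def WeaklyIsomorphic (U W : ℝ → ℝ → ℝ) : Prop :=
  ∀ (n : ℕ) (F : SimpleGraph (Fin n)), homDensity F U = homDensity F W

/-- `W` is finitely forcible within the class `A`. -/
def FinitelyForcible (A : (ℝ → ℝ → ℝ) → Prop) (W : ℝ → ℝ → ℝ) : Prop :=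
  A W ∧ ∃ (k : ℕ) (n : Fin k → ℕ) (F : ∀ i, SimpleGraph (Fin (n i))),
    ∀ U, A U → (∀ i, homDensity (F i) U = homDensity (F i) W) → WeaklyIsomorphic U W

/-- Density function `t^k(F,W)` of a `k`-labeled graph, as a function of the
labeled variables; the graph has `k` labeled and `m` unlabeled vertices. -/
def labDensity {k m : ℕ} (F : SimpleGraph (Fin (k + m))) (W : ℝ → ℝ → ℝ)
    (x : Fin k → ℝ) : ℝ :=
  ∫ y in cube m,
    ∏ p ∈ Finset.univ.filter
        (fun p : Fin (k + m) × Fin (k + m) => p.1 < p.2 ∧ F.Adj p.1 p.2),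
      W (Fin.append x y p.1) (Fin.append x y p.2)


/-- Bounded measurable real functions. -/
def BM {α : Type*} [MeasurableSpace α] (f : α → ℝ) : Prop :=
  Measurable f ∧ ∃ C : ℝ, ∀ x, |f x| ≤ C

section bm
variable {α β : Type*} [MeasurableSpace α] [MeasurableSpace β]

lemma BM.integrable {f : α → ℝ} (h : BM f) (μ : Measure α) [IsFiniteMeasure μ] :
    Integrable f μ := by
  obtain ⟨hm, C, hC⟩ := h
  exact Integrable.of_bound hm.aestronglyMeasurable C (Filter.Eventually.of_forall hC)

lemma BM.mul {f g : α → ℝ} (hf : BM f) (hg : BM g) : BM (fun x => f x * g x) := by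
  obtain ⟨hm, C, hC⟩ := hf
  obtain ⟨hm', C', hC'⟩ := hg
  refine ⟨hm.mul hm', C * C', fun x => ?_⟩
  rw [abs_mul]
  exact mul_le_mul (hC x) (hC' x) (abs_nonneg _) ((abs_nonneg _).trans (hC x))

lemma BM.add {f g : α → ℝ} (hf : BM f) (hg : BM g) : BM (fun x => f x + g x) := by
  obtain ⟨hm, C, hC⟩ := hf
  obtain ⟨hm', C', hC'⟩ := hg
  exact ⟨hm.add hm', C + C', fun x => (abs_add_le _ _).trans (add_le_add (hC x) (hC' x))⟩

lemma BM.sub {f g : α → ℝ} (hf : BM f) (hg : BM g) : BM (fun x => f x - g x) := by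
  obtain ⟨hm, C, hC⟩ := hf
  obtain ⟨hm', C', hC'⟩ := hg
  exact ⟨hm.sub hm', C + C', fun x => (abs_sub _ _).trans (add_le_add (hC x) (hC' x))⟩

lemma BM.const (c : ℝ) : BM (fun _ : α => c) := ⟨measurable_const, |c|, fun _ => le_rfl⟩

lemma BM.comp {f : β → ℝ} (hf : BM f) {g : α → β} (hg : Measurable g) :
    BM (fun x => f (g x)) := by
  obtain ⟨hm, C, hC⟩ := hf
  exact ⟨hm.comp hg, C, fun x => hC _⟩

lemma BM.pow {f : α → ℝ} (hf : BM f) (n : ℕ) : BM (fun x => f x ^ n) := by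
  induction n with
  | zero => simpa using BM.const 1
  | succ n ih => simpa [pow_succ] using ih.mul hf

lemma BM.min {f g : α → ℝ} (hf : BM f) (hg : BM g) : BM (fun x => min (f x) (g x)) := by
  obtain ⟨hm, C, hC⟩ := hf
  obtain ⟨hm', C', hC'⟩ := hg
  refine ⟨hm.min hm', Max.max C C', fun x => ?_⟩
  simp only
  rcases min_choice (f x) (g x) with h | h <;> rw [h]
  · exact (hC x).trans (le_max_left _ _)
  · exact (hC' x).trans (le_max_right _ _)

lemma BM.max {f g : α → ℝ} (hf : BM f) (hg : BM g) : BM (fun x => max (f x) (g x)) := by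
  obtain ⟨hm, C, hC⟩ := hf
  obtain ⟨hm', C', hC'⟩ := hg
  refine ⟨hm.max hm', Max.max C C', fun x => ?_⟩
  simp only
  rcases max_choice (f x) (g x) with h | h <;> rw [h]
  · exact (hC x).trans (le_max_left _ _)
  · exact (hC' x).trans (le_max_right _ _)

lemma BM.ite {s : Set α} (hs : MeasurableSet s) : BM (fun x => if x ∈ s then (1 : ℝ) else 0) := by
  refine ⟨Measurable.ite hs measurable_const measurable_const, 1, fun x => ?_⟩
  simp only
  split_ifs <;> simp

lemma BM.prod {ι : Type*} (s : Finset ι) {f : ι → α → ℝ} (hf : ∀ i, BM (f i)) :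
    BM (fun x => ∏ i ∈ s, f i x) := by
  induction s using Finset.induction_on with
  | empty => simpa using BM.const 1
  | insert a s ha ih => simpa [Finset.prod_insert ha] using (hf a).mul ih

lemma BM.integral {f : α → β → ℝ} (hf : BM (Function.uncurry f)) (ν : Measure β)
    [IsProbabilityMeasure ν] : BM (fun x => ∫ y, f x y ∂ν) := by
  obtain ⟨hm, C, hC⟩ := hf
  refine ⟨(hm.stronglyMeasurable.integral_prod_right).measurable, C, fun x => ?_⟩
  have := norm_integral_le_of_norm_le_const (μ := ν) (f := fun y => f x y) (C := C)
    (Filter.Eventually.of_forall fun y => hC (x, y))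
  simpa using this

lemma BM.swap {f : α → β → ℝ} (hf : BM (Function.uncurry f)) :
    BM (Function.uncurry fun y x => f x y) :=
  hf.comp (g := fun p : β × α => (p.2, p.1)) (by fun_prop)

lemma BM.left {f : α → β → ℝ} (hf : BM (Function.uncurry f)) (x : α) : BM (fun y => f x y) :=
  hf.comp (g := fun y : β => (x, y)) (by fun_prop)

lemma BM.right {f : α → β → ℝ} (hf : BM (Function.uncurry f)) (y : β) : BM (fun x => f x y) :=
  hf.comp (g := fun x : α => (x, y)) (by fun_prop)

lemma BM.fst {f : α → ℝ} (hf : BM f) : BM (Function.uncurry fun (x : α) (_ : β) => f x) :=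
  hf.comp (g := fun p : α × β => p.1) (by fun_prop)

lemma BM.snd {f : β → ℝ} (hf : BM f) : BM (Function.uncurry fun (_ : α) (y : β) => f y) :=
  hf.comp (g := fun p : α × β => p.2) (by fun_prop)

/-- Associativity of kernel composition. -/
lemma fub {A : α → ℝ} {B : α → β → ℝ} {f : β → ℝ} (hA : BM A) (hB : BM (Function.uncurry B))
    (hf : BM f) (μ : Measure α) (ν : Measure β) [IsProbabilityMeasure μ]
    [IsProbabilityMeasure ν] :
    ∫ t, A t * (∫ s, B t s * f s ∂ν) ∂μ = ∫ s, (∫ t, A t * B t s ∂μ) * f s ∂ν := by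
  have h : BM (Function.uncurry fun t s => A t * (B t s * f s)) :=
    hA.fst.mul (hB.mul hf.snd)
  have := integral_integral_swap (h.integrable (μ.prod ν))
  simp only [← integral_const_mul, ← integral_mul_const, mul_assoc] at this ⊢
  exact this

/-- A symmetric kernel with zero square vanishes. -/
lemma sq_zero {μ : Measure α} [IsProbabilityMeasure μ] {V : α → α → ℝ}
    (hV : BM (Function.uncurry V)) (hs : ∀ x y, V x y = V y x)
    (h : ∀ᵐ p ∂(μ.prod μ), ∫ z, V p.1 z * V z p.2 ∂μ = 0) :
    ∀ᵐ p ∂(μ.prod μ), V p.1 p.2 = 0 := by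
  have key : ∀ f : α → ℝ, BM f → ∀ᵐ x ∂μ, ∫ z, V x z * f z ∂μ = 0 := by
    intro f hf
    have hphi : BM (fun x => ∫ z, V x z * f z ∂μ) := BM.integral (hV.mul hf.snd) μ
    have h1 : ∫ x, (∫ z, V x z * f z ∂μ) * (∫ z, V x z * f z ∂μ) ∂μ = 0 := by
      rw [fub hphi hV hf μ μ]
      have h2 : ∀ᵐ s ∂μ, (∫ t, (∫ z, V t z * f z ∂μ) * V t s ∂μ) = 0 := by
        filter_upwards [Measure.ae_ae_of_ae_prod h] with s hsz
        have := fub (A := fun t => V s t) (hV.left s) hV hf μ μ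
        have e : ∀ t, (∫ z, V t z * f z ∂μ) * V t s = V s t * ∫ z, V t z * f z ∂μ := by
          intro t; rw [mul_comm, hs t s]
        simp_rw [e]
        rw [this]
        apply integral_eq_zero_of_ae
        filter_upwards [hsz] with w hw
        simp [hw]
      apply integral_eq_zero_of_ae
      filter_upwards [h2] with s hs'
      simp [hs']
    rw [integral_eq_zero_iff_of_nonneg (fun x => mul_self_nonneg _)
      ((hphi.mul hphi).integrable μ)] at h1
    filter_upwards [h1] with x hx
    simpa using hx
  have hVi := hV.integrable (μ.prod μ)
  have hall : ∀ s : Set (α × α), MeasurableSet s → ∫ p in s, V p.1 p.2 ∂(μ.prod μ) = 0 := by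
    have huniv : ∫ p, V p.1 p.2 ∂(μ.prod μ) = 0 := by
      have : ∫ p, V p.1 p.2 ∂(μ.prod μ) = ∫ x, ∫ y, V x y ∂μ ∂μ := integral_prod _ hVi
      rw [this]
      apply integral_eq_zero_of_ae
      filter_upwards [key _ (BM.const 1)] with x hx
      simpa using hx
    intro s hs
    induction s, hs using MeasurableSpace.induction_on_inter generateFrom_prod.symm isPiSystem_prod with
    | empty => simp
    | basic t ht =>
      obtain ⟨A, hA, B, hB, rfl⟩ := ht
      have : ∫ p in A ×ˢ B, V p.1 p.2 ∂(μ.prod μ) = ∫ x in A, ∫ y in B, V x y ∂μ ∂μ :=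
        setIntegral_prod _ hVi.integrableOn
      rw [this]
      apply integral_eq_zero_of_ae
      apply ae_restrict_of_ae
      filter_upwards [key _ (BM.ite hB)] with x hx
      rw [← integral_indicator hB]
      simp only [Pi.zero_apply]
      rw [← hx]
      congr 1
      ext z
      simp [Set.indicator_apply]
    | compl t ht ih =>
      have := integral_add_compl ht hVi
      simp only [Function.uncurry_def] at this
      rw [ih, huniv] at this
      simpa using this
    | iUnion f hd hm ih =>
      have := integral_iUnion hm hd hVi.integrableOn
      simp only [Function.uncurry_def, ih, tsum_zero] at this
      exact this
  have := Integrable.ae_eq_zero_of_forall_setIntegral_eq_zero hVi (fun s hs _ => hall s hs)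
  filter_upwards [this] with p hp
  exact hp

end bm

/-- Lebesgue measure on the unit interval. -/
def lam : Measure ℝ := volume.restrict I01

instance lam_prob : IsProbabilityMeasure lam := ⟨by simp [lam, I01]⟩

lemma lam_mem : ∀ᵐ t ∂lam, t ∈ Set.Icc (0 : ℝ) 1 :=
  ae_restrict_mem measurableSet_Icc

/-- Clamping to the unit interval. -/
def clp (d : ℝ) : ℝ := max 0 (min 1 d)

lemma clp_cont : Continuous clp := by unfold clp; fun_prop

lemma clp_mem (d : ℝ) : clp d ∈ Set.Icc (0 : ℝ) 1 := by
  unfold clp; constructor <;> simp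

lemma clp_eq {d : ℝ} (h : d ∈ Set.Icc (0 : ℝ) 1) : clp d = d := by
  unfold clp; simp [h.1, h.2]

lemma clp_bm : BM clp := ⟨clp_cont.measurable, 1, fun x => by
  have := clp_mem x; rw [abs_of_nonneg this.1]; exact this.2⟩

lemma lam_interval (a b : ℝ) (ha : 0 ≤ a) (hab : a ≤ b) (hb : b ≤ 1) (f : ℝ → ℝ) :
    ∫ t, (if t ∈ Set.Icc a b then 1 else 0) * f t ∂lam = ∫ t in a..b, f t := by
  have : ∀ t, (if t ∈ Set.Icc a b then 1 else 0) * f t = (Set.Icc a b).indicator f t := by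
    intro t; simp [Set.indicator_apply]
  simp_rw [this]
  rw [integral_indicator measurableSet_Icc, lam, I01, Measure.restrict_restrict measurableSet_Icc,
    Set.inter_eq_left.2 (Set.Icc_subset_Icc ha hb), intervalIntegral.integral_of_le hab,
    integral_Icc_eq_integral_Ioc]

lemma lam_le (d : ℝ) (f : ℝ → ℝ) :
    ∫ t, (if t ≤ d then 1 else 0) * f t ∂lam = ∫ t in (0 : ℝ)..clp d, f t := by
  rcases lt_or_ge d 0 with h | h
  · have : clp d = 0 := by unfold clp; rw [min_eq_right (by linarith), max_eq_left h.le]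
    rw [this]
    simp only [intervalIntegral.integral_same]
    apply integral_eq_zero_of_ae
    filter_upwards [lam_mem] with t ht
    have : ¬ t ≤ d := by have := ht.1; linarith
    simp [this]
  · rw [← lam_interval 0 (clp d) le_rfl (clp_mem d).1 (clp_mem d).2]
    apply integral_congr_ae
    filter_upwards [lam_mem] with t ht
    have : t ≤ d ↔ t ∈ Set.Icc 0 (clp d) := by
      unfold clp; simp [ht.1, ht.2, h]
    simp only [this]

lemma lam_one (f : ℝ → ℝ) : ∫ t, f t ∂lam = ∫ t in (0 : ℝ)..1, f t := by
  rw [← lam_interval 0 1 le_rfl zero_le_one le_rfl]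
  apply integral_congr_ae
  filter_upwards [lam_mem] with t ht
  simp only [ht, if_true, one_mul]

lemma lam_A (d : ℝ) : ∫ t, (1 - clp t) * (if t ≤ d then 1 else 0) ∂lam
    = clp d - clp d ^ 2 / 2 := by
  simp_rw [mul_comm (1 - clp _)]
  rw [lam_le]
  have : ∫ t in (0 : ℝ)..clp d, (1 - clp t) = ∫ t in (0 : ℝ)..clp d, (1 - t) := by
    apply intervalIntegral.integral_congr
    intro t ht
    rw [Set.uIcc_of_le (clp_mem d).1] at ht
    simp only
    rw [clp_eq ⟨ht.1, ht.2.trans (clp_mem d).2⟩]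
  rw [this, intervalIntegral.integral_sub (by simp) (by simp)]
  simp

lemma lam_AA : ∫ t, (1 - clp t) * (1 - clp t) ∂lam = 1 / 3 := by
  rw [lam_one]
  have : ∫ t in (0 : ℝ)..1, (1 - clp t) * (1 - clp t) = ∫ t in (0 : ℝ)..1, (1 - t) ^ 2 := by
    apply intervalIntegral.integral_congr
    intro t ht
    rw [Set.uIcc_of_le zero_le_one] at ht
    simp only
    rw [clp_eq ht]; ring
  rw [this, intervalIntegral.integral_comp_sub_left (fun t => t ^ 2) 1]
  norm_num

lemma lam_min (d e : ℝ) : ∫ t, (if t ≤ d then (1 : ℝ) else 0) * (if t ≤ e then 1 else 0) ∂lam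
    = min (clp d) (clp e) := by
  have : ∀ t, (if t ≤ d then (1 : ℝ) else 0) * (if t ≤ e then 1 else 0)
      = (if t ≤ min d e then 1 else 0) * 1 := by
    intro t; simp only [le_min_iff]; split_ifs <;> simp_all
  simp_rw [this]
  rw [lam_le]
  simp [clp, min_left_comm, max_min_distrib_left]
  grind

lemma pointwise_ineq (u v : ℝ) :
    min (clp u) (clp v) - (clp u - clp u ^ 2 / 2) - (clp v - clp v ^ 2 / 2)
      ≤ min u v - (u - u ^ 2 / 2) - (v - v ^ 2 / 2) := by
  have h1 : ∀ u : ℝ, u - u ^ 2 / 2 + max 0 (-u) ≤ clp u - clp u ^ 2 / 2 := by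
    intro u
    unfold clp
    rcases le_total u 0 with h | h
    · rw [min_eq_right (by linarith), max_eq_left h, max_eq_right (by linarith)]; nlinarith
    · rcases le_total u 1 with h' | h'
      · rw [min_eq_right h', max_eq_right h, max_eq_left (by linarith)]; linarith
      · rw [min_eq_left h', max_eq_right zero_le_one, max_eq_left (by linarith)]; nlinarith
  have h2 : min (clp u) (clp v) ≤ min u v + max 0 (-u) + max 0 (-v) := by
    unfold clp; grind
  have := h1 u
  have := h1 v
  linarith

section stage1
variable {Ω : Type*} [MeasurableSpace Ω] {μ : Measure Ω} [IsProbabilityMeasure μ]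

lemma energy (D : Ω → ℝ) (hD : BM D) :
    ∫ t, ((∫ x, (if t ≤ D x then (1 : ℝ) else 0) ∂μ) - (1 - clp t)) ^ 2 ∂lam
      = (∫ x, ∫ y, min (clp (D x)) (clp (D y)) ∂μ ∂μ)
        - 2 * (∫ x, (clp (D x) - clp (D x) ^ 2 / 2) ∂μ) + 1 / 3 := by
  have hh : BM (Function.uncurry fun (t : ℝ) (x : Ω) => if t ≤ D x then (1 : ℝ) else 0) := by
    have : MeasurableSet {p : ℝ × Ω | p.1 ≤ D p.2} :=
      measurableSet_le measurable_fst (hD.1.comp measurable_snd)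
    exact BM.ite this
  have hN := BM.integral hh μ
  have hA : BM (fun t => 1 - clp t) := (BM.const 1).sub clp_bm
  have e1 : ∫ t, (∫ x, (if t ≤ D x then (1 : ℝ) else 0) ∂μ)
      * (∫ x, (if t ≤ D x then (1 : ℝ) else 0) ∂μ) ∂lam
      = ∫ x, ∫ y, min (clp (D x)) (clp (D y)) ∂μ ∂μ := by
    have := fub hN hh (BM.const 1) lam μ
    simp only [mul_one] at this
    rw [this]
    congr 1
    ext x
    have := fub (hh.right x) hh (BM.const 1) lam μ
    simp only [mul_one] at this
    simp_rw [lam_min] at this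
    rw [← this]
    congr 1
    ext t
    rw [mul_comm]
  have e2 : ∫ t, (1 - clp t) * (∫ x, (if t ≤ D x then (1 : ℝ) else 0) ∂μ) ∂lam
      = ∫ x, (clp (D x) - clp (D x) ^ 2 / 2) ∂μ := by
    have := fub hA hh (BM.const 1) lam μ
    simp only [mul_one] at this
    rw [this]
    simp_rw [lam_A]
  rw [← e1, ← e2, ← lam_AA, ← integral_const_mul, ← integral_sub, ← integral_add]
  · congr 1; ext t; ring
  · exact ((hN.mul hN).sub ((BM.const 2).mul (hA.mul hN))).integrable _
  · exact (hA.mul hA).integrable _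
  · exact (hN.mul hN).integrable _
  · exact ((BM.const 2).mul (hA.mul hN)).integrable _

lemma stage1 (D : Ω → ℝ) (hD : BM D) (c : Ω → Ω → ℝ) (hc : BM (Function.uncurry c))
    (h1 : ∫ x, D x ∂μ = 1 / 2) (h2 : ∫ x, D x ^ 2 ∂μ = 1 / 3)
    (h3 : ∫ x, ∫ y, c x y ∂μ ∂μ = 1 / 3)
    (h4 : ∀ᵐ p ∂(μ.prod μ), min (D p.1) (D p.2) ≤ c p.1 p.2) :
    (∀ᵐ p ∂(μ.prod μ), c p.1 p.2 = min (D p.1) (D p.2)) ∧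
    (∀ᵐ t ∂lam, ∫ x, (if t ≤ D x then (1 : ℝ) else 0) ∂μ = 1 - t) := by
  have hE := BM.comp clp_bm hD.1
  have hGE : BM (fun x => clp (D x) - clp (D x) ^ 2 / 2) := by
    have := hE.sub ((BM.const (1 / 2)).mul (hE.pow 2))
    refine cast ?_ this
    congr 1; ext x; ring
  have hGD : BM (fun x => D x - D x ^ 2 / 2) := by
    have := hD.sub ((BM.const (1 / 2)).mul (hD.pow 2))
    refine cast ?_ this
    congr 1; ext x; ring
  have hmE : BM (Function.uncurry fun x y => min (clp (D x)) (clp (D y))) := hE.fst.min hE.snd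
  have hmD : BM (Function.uncurry fun x y => min (D x) (D y)) := hD.fst.min hD.snd
  have hIG : ∫ x, (D x - D x ^ 2 / 2) ∂μ = 1 / 3 := by
    rw [integral_sub (hD.integrable _) ((hD.pow 2).integrable _ |>.div_const 2),
      integral_div, h1, h2]; norm_num
  have hfst : ∀ f : Ω → ℝ, BM f → ∫ p : Ω × Ω, f p.1 ∂(μ.prod μ) = ∫ x, f x ∂μ := by
    intro f hf
    have := integral_prod _ (hf.fst.integrable (μ.prod μ))
    simpa [Function.uncurry_def] using this
  have hsnd : ∀ f : Ω → ℝ, BM f → ∫ p : Ω × Ω, f p.2 ∂(μ.prod μ) = ∫ x, f x ∂μ := by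
    intro f hf
    have := integral_prod _ (hf.snd.integrable (μ.prod μ))
    simpa [Function.uncurry_def] using this
  have hen := energy (μ := μ) D hD
  have hpos : 0 ≤ ∫ t, ((∫ x, (if t ≤ D x then (1 : ℝ) else 0) ∂μ) - (1 - clp t)) ^ 2 ∂lam :=
    integral_nonneg fun t => sq_nonneg _
  have i1 : ∫ p, min (clp (D p.1)) (clp (D p.2)) ∂(μ.prod μ)
      = ∫ x, ∫ y, min (clp (D x)) (clp (D y)) ∂μ ∂μ := integral_prod _ (hmE.integrable _)
  have i2 : ∫ p, c p.1 p.2 ∂(μ.prod μ) = 1 / 3 := by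
    rw [← h3]; exact integral_prod _ (hc.integrable _)
  have i3 : ∫ p, (min (clp (D p.1)) (clp (D p.2)) - (clp (D p.1) - clp (D p.1) ^ 2 / 2)
      - (clp (D p.2) - clp (D p.2) ^ 2 / 2)) ∂(μ.prod μ)
      ≤ ∫ p, (min (D p.1) (D p.2) - (D p.1 - D p.1 ^ 2 / 2)
      - (D p.2 - D p.2 ^ 2 / 2)) ∂(μ.prod μ) := by
    apply integral_mono
    · exact ((hmE.sub hGE.fst).sub hGE.snd).integrable _
    · exact ((hmD.sub hGD.fst).sub hGD.snd).integrable _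
    · intro p; exact pointwise_ineq _ _
  have split : ∀ (m : Ω → Ω → ℝ) (f : Ω → ℝ), BM (Function.uncurry m) → BM f →
      ∫ p, (m p.1 p.2 - f p.1 - f p.2) ∂(μ.prod μ)
        = ∫ p, m p.1 p.2 ∂(μ.prod μ) - 2 * ∫ x, f x ∂μ := by
    intro m f hm hf
    have e1 := integral_sub ((hm.sub hf.fst).integrable (μ.prod μ)) (hf.snd.integrable (μ.prod μ))
    have e2 := integral_sub (hm.integrable (μ.prod μ)) (hf.fst.integrable (μ.prod μ))
    simp only [Function.uncurry_def] at e1 e2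
    rw [e1, e2, hfst f hf, hsnd f hf]
    ring
  rw [split _ _ hmE hGE, split _ _ hmD hGD, hIG, i1] at i3
  have i4 : ∫ p, min (D p.1) (D p.2) ∂(μ.prod μ) ≤ ∫ p, c p.1 p.2 ∂(μ.prod μ) :=
    integral_mono_ae (hmD.integrable _) (hc.integrable _) h4
  constructor
  · have : ∫ p, (c p.1 p.2 - min (D p.1) (D p.2)) ∂(μ.prod μ) = 0 := by
      have e := integral_sub (hc.integrable (μ.prod μ)) (hmD.integrable (μ.prod μ))
      simp only [Function.uncurry_def] at e
      rw [e]
      linarith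
    have hnn : 0 ≤ᵐ[μ.prod μ] fun p => c p.1 p.2 - min (D p.1) (D p.2) := by
      filter_upwards [h4] with p hp
      simpa using hp
    have this := (integral_eq_zero_iff_of_nonneg_ae hnn ((hc.sub hmD).integrable _)).1 this
    filter_upwards [this] with p hp
    simp only [Pi.zero_apply] at hp
    linarith
  · have h0 : ∫ t, ((∫ x, (if t ≤ D x then (1 : ℝ) else 0) ∂μ) - (1 - clp t)) ^ 2 ∂lam = 0 := by
      linarith
    have hh : BM (Function.uncurry fun (t : ℝ) (x : Ω) => if t ≤ D x then (1 : ℝ) else 0) := by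
      have : MeasurableSet {p : ℝ × Ω | p.1 ≤ D p.2} :=
        measurableSet_le measurable_fst (hD.1.comp measurable_snd)
      exact BM.ite this
    have hN := BM.integral hh μ
    rw [integral_eq_zero_iff_of_nonneg (fun t => sq_nonneg _)
      (((hN.sub ((BM.const 1).sub clp_bm)).pow 2).integrable _)] at h0
    filter_upwards [h0, lam_mem] with t ht htm
    rw [clp_eq htm] at ht
    simp only [Pi.zero_apply] at ht
    have := pow_eq_zero_iff (two_ne_zero) |>.1 ht
    linarith

lemma uniform_law (D : Ω → ℝ) (hD : BM D)
    (h : ∀ᵐ t ∂lam, ∫ x, (if t ≤ D x then (1 : ℝ) else 0) ∂μ = 1 - t) :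
    μ.map D = lam := by
  have hN : ∀ t, ∫ x, (if t ≤ D x then (1 : ℝ) else 0) ∂μ = (μ.map D).real (Set.Ici t) := by
    intro t
    rw [map_measureReal_apply hD.1 measurableSet_Ici,
      ← integral_indicator_one (hD.1 measurableSet_Ici)]
    congr 1
  simp_rw [hN] at h
  have : IsProbabilityMeasure (μ.map D) := Measure.isProbabilityMeasure_map hD.1.aemeasurable
  set ν := μ.map D
  have hd : ∀ a b : ℝ, 0 ≤ a → a < b → b ≤ 1 → ∃ t, a < t ∧ t < b ∧ ν.real (Set.Ici t) = 1 - t := by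
    intro a b ha hab hb
    have h' : ∀ᵐ t ∂(volume.restrict (Set.Ioo a b)), ν.real (Set.Ici t) = 1 - t :=
      ae_restrict_of_ae_restrict_of_subset
        ((Set.Ioo_subset_Icc_self).trans (Set.Icc_subset_Icc ha hb)) h
    have h'' := h'.and (ae_restrict_mem (μ := volume) (measurableSet_Ioo (a := a) (b := b)))
    have hne : (ae (volume.restrict (Set.Ioo a b))).NeBot := by
      rw [ae_neBot]
      intro h0
      rw [Measure.restrict_eq_zero] at h0
      simp at h0
      linarith
    obtain ⟨t, ht1, ht2⟩ := h''.exists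
    exact ⟨t, ht2.1, ht2.2, ht1⟩
  have hmono : ∀ a b : ℝ, a ≤ b → ν.real (Set.Ici b) ≤ ν.real (Set.Ici a) := fun a b hab =>
    measureReal_mono (Set.Ici_subset_Ici.2 hab)
  have hval : ∀ a, ν.real (Set.Ici a) = 1 - clp a := by
    intro a
    have hle : ν.real (Set.Ici a) ≤ 1 := measureReal_le_one
    have hge : 0 ≤ ν.real (Set.Ici a) := measureReal_nonneg
    have hc := clp_mem a
    apply le_antisymm
    · by_contra hlt
      push Not at hlt
      have ha : 0 < a := by
        by_contra h0
        have : clp a = 0 := by unfold clp; grind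
        linarith
      have hca : clp a ≤ a := by unfold clp; grind
      obtain ⟨t, h1, h2, h3⟩ := hd (1 - ν.real (Set.Ici a)) (clp a) (by linarith) (by linarith) hc.2
      have := hmono t a (by linarith)
      linarith
    · by_contra hlt
      push Not at hlt
      have ha : a < 1 := by
        by_contra h0
        have : clp a = 1 := by unfold clp; grind
        linarith
      have hca : a ≤ clp a := by unfold clp; grind
      obtain ⟨t, h1, h2, h3⟩ := hd (clp a) (1 - ν.real (Set.Ici a)) hc.1 (by linarith) (by linarith)
      have := hmono a t (by linarith)
      linarith
  apply Measure.ext_of_Ici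
  intro a
  have h2 : lam.real (Set.Ici a) = 1 - clp a := by
    have : Set.Ici a ∩ I01 = Set.Icc (max a 0) 1 := by
      ext t; simp [I01]; tauto
    rw [measureReal_def, lam, Measure.restrict_apply measurableSet_Ici, this, Real.volume_Icc]
    rw [ENNReal.toReal_ofReal']
    unfold clp; grind
  have := (hval a).trans h2.symm
  rwa [measureReal_def, measureReal_def, ENNReal.toReal_eq_toReal_iff' (by finiteness) (by finiteness)] at this

end stage1

/-- The half-graphon in degree coordinates. -/
def KK (a s : ℝ) : ℝ := if 1 ≤ a + s then 1 else 0

lemma KK_bm : BM (Function.uncurry KK) := by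
  have : MeasurableSet {p : ℝ × ℝ | 1 ≤ p.1 + p.2} :=
    measurableSet_le measurable_const (measurable_fst.add measurable_snd)
  exact BM.ite this

lemma KK_symm (a s : ℝ) : KK a s = KK s a := by unfold KK; rw [add_comm]

lemma KK_int {a : ℝ} (ha : a ∈ Set.Icc (0 : ℝ) 1) (f : ℝ → ℝ) :
    ∫ s, KK a s * f s ∂lam = ∫ s in (1 - a)..1, f s := by
  rw [← lam_interval (1 - a) 1 (by linarith [ha.2]) (by linarith [ha.1]) le_rfl]
  apply integral_congr_ae
  filter_upwards [lam_mem] with t ht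
  have : 1 ≤ a + t ↔ t ∈ Set.Icc (1 - a) 1 := by
    simp only [Set.mem_Icc, ht.2, and_true]; constructor <;> intro h <;> linarith
  simp only [KK, this]

lemma KK_comp {a b : ℝ} (ha : a ∈ Set.Icc (0 : ℝ) 1) (hb : b ∈ Set.Icc (0 : ℝ) 1) :
    ∫ t, KK a t * KK t b ∂lam = min a b := by
  have hm : min a b ∈ Set.Icc (0 : ℝ) 1 := ⟨le_min ha.1 hb.1, (min_le_left _ _).trans ha.2⟩
  have : ∀ t, KK a t * KK t b = KK (min a b) t * 1 := by
    intro t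
    unfold KK
    rcases le_total a b with h | h
    · rw [min_eq_left h]; split_ifs <;> first | (exfalso; linarith) | simp
    · rw [min_eq_right h]; split_ifs <;> first | (exfalso; linarith) | simp
  simp_rw [this]
  rw [KK_int hm]
  simp

section stage2
variable {Ω : Type*} [MeasurableSpace Ω] {μ : Measure Ω} [IsProbabilityMeasure μ]

/-- `U` acts on `f ∘ D` as the half graphon does. -/
def Good (μ : Measure Ω) (U : Ω → Ω → ℝ) (D : Ω → ℝ) (f : ℝ → ℝ) : Prop :=
  ∀ᵐ x ∂μ, ∫ z, U x z * f (D z) ∂μ = ∫ s, KK (D x) s * f s ∂lam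

variable {U : Ω → Ω → ℝ} {D : Ω → ℝ}

lemma D_mem (hD : BM D) (hmap : μ.map D = lam) : ∀ᵐ x ∂μ, D x ∈ Set.Icc (0 : ℝ) 1 := by
  have := lam_mem
  rw [← hmap] at this
  exact ae_of_ae_map hD.1.aemeasurable this

lemma push (hD : BM D) (hmap : μ.map D = lam) (f : ℝ → ℝ) (hf : Measurable f) :
    ∫ z, f (D z) ∂μ = ∫ s, f s ∂lam := by
  rw [← hmap, integral_map hD.1.aemeasurable hf.aestronglyMeasurable]

lemma Good.lin (hU : BM (Function.uncurry U)) (hD : BM D) {f g : ℝ → ℝ} (hf : BM f) (hg : BM g)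
    (h1 : Good μ U D f) (h2 : Good μ U D g) (a b : ℝ) :
    Good μ U D (fun s => a * f s + b * g s) := by
  filter_upwards [h1, h2] with x h1 h2
  have e1 : ∀ z, U x z * (a * f (D z) + b * g (D z))
      = a * (U x z * f (D z)) + b * (U x z * g (D z)) := fun z => by ring
  have e2 : ∀ s, KK (D x) s * (a * f s + b * g s)
      = a * (KK (D x) s * f s) + b * (KK (D x) s * g s) := fun z => by ring
  simp_rw [e1, e2]
  rw [integral_add, integral_add, integral_const_mul, integral_const_mul, integral_const_mul,
    integral_const_mul, h1, h2]
  · exact ((BM.const a).mul ((KK_bm.left _).mul hf)).integrable _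
  · exact ((BM.const b).mul ((KK_bm.left _).mul hg)).integrable _
  · exact ((BM.const a).mul ((hU.left x).mul (hf.comp hD.1))).integrable _
  · exact ((BM.const b).mul ((hU.left x).mul (hg.comp hD.1))).integrable _

lemma Good.step (hU : BM (Function.uncurry U)) (hD : BM D) (hmap : μ.map D = lam)
    (hc : ∀ᵐ p ∂(μ.prod μ), ∫ z, U p.1 z * U z p.2 ∂μ = min (D p.1) (D p.2))
    {f g : ℝ → ℝ} (hf : BM f)
    (hfg : ∀ a ∈ Set.Icc (0 : ℝ) 1, g a = ∫ s, KK a s * f s ∂lam)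
    (h1 : Good μ U D f) : Good μ U D g := by
  have hDm := D_mem hD hmap
  filter_upwards [Measure.ae_ae_of_ae_prod hc, hDm] with x hx hxm
  have e1 : ∫ z, U x z * g (D z) ∂μ = ∫ z, U x z * (∫ y, U z y * f (D y) ∂μ) ∂μ := by
    apply integral_congr_ae
    filter_upwards [h1, hDm] with z hz hzm
    rw [hz, hfg _ hzm]
  rw [e1, fub (hU.left x) hU (hf.comp hD.1) μ μ]
  have e2 : ∫ s, (∫ t, U x t * U t s ∂μ) * f (D s) ∂μ = ∫ s, min (D x) (D s) * f (D s) ∂μ := by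
    apply integral_congr_ae
    filter_upwards [hx] with z hz
    rw [hz]
  rw [e2, push hD hmap (fun s => min (D x) s * f s)
    ((measurable_const.min measurable_id).mul hf.1)]
  have e3 : ∫ s, min (D x) s * f s ∂lam = ∫ s, (∫ t, KK (D x) t * KK t s ∂lam) * f s ∂lam := by
    apply integral_congr_ae
    filter_upwards [lam_mem] with s hs
    rw [KK_comp hxm hs]
  rw [e3, ← fub (KK_bm.left (D x)) KK_bm hf lam lam]
  apply integral_congr_ae
  filter_upwards [lam_mem] with s hs
  rw [hfg _ hs]

lemma Good.powers (hU : BM (Function.uncurry U)) (hD : BM D) (hmap : μ.map D = lam)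
    (hdeg : ∀ x, D x = ∫ z, U x z ∂μ)
    (hc : ∀ᵐ p ∂(μ.prod μ), ∫ z, U p.1 z * U z p.2 ∂μ = min (D p.1) (D p.2)) (k : ℕ) :
    Good μ U D (fun s => clp s ^ k) ∧ Good μ U D (fun s => (1 - clp s) ^ k) := by
  have hone : Good μ U D (fun _ => 1) := by
    filter_upwards [D_mem hD hmap] with x hx
    rw [KK_int hx]
    simp [hdeg x]
  have b1 : ∀ k : ℕ, BM (fun s => clp s ^ k) := fun k => clp_bm.pow k
  have b2 : ∀ k : ℕ, BM (fun s => (1 - clp s) ^ k) := fun k => ((BM.const 1).sub clp_bm).pow k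
  have cc : ∀ (g : ℝ → ℝ) (a : ℝ), a ∈ Set.Icc (0 : ℝ) 1 →
      ∫ s in (1 - a)..1, g (clp s) = ∫ s in (1 - a)..1, g s := by
    intro g a ha
    apply intervalIntegral.integral_congr
    intro t ht
    rw [Set.uIcc_of_le (by linarith [ha.1])] at ht
    simp only
    rw [clp_eq ⟨by linarith [ht.1, ha.2], ht.2⟩]
  induction k with
  | zero => simpa using hone
  | succ k ih =>
    have hk : (k : ℝ) + 1 ≠ 0 := by positivity
    constructor
    · have g1 : Good μ U D (fun s => clp s ^ (k + 1) / (k + 1)) := by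
        refine Good.step hU hD hmap hc (b2 k) ?_ ih.2
        intro a ha
        rw [KK_int ha, cc (fun s => (1 - s) ^ k) a ha, clp_eq ha,
          intervalIntegral.integral_comp_sub_left (fun s => s ^ k) 1]
        simp
      have hb : BM (fun s => clp s ^ (k + 1) / (k + 1)) := by
        simpa [div_eq_mul_inv] using (b1 (k + 1)).mul (BM.const ((k : ℝ) + 1)⁻¹)
      have := Good.lin hU hD hb (BM.const 1) g1 hone (k + 1) 0
      refine cast ?_ this
      congr 1; ext s; field_simp; ring
    · have g1 : Good μ U D (fun s => (1 - (1 - clp s) ^ (k + 1)) / (k + 1)) := by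
        refine Good.step hU hD hmap hc (b1 k) ?_ ih.1
        intro a ha
        rw [KK_int ha, cc (fun s => s ^ k) a ha, clp_eq ha]
        simp
      have hb : BM (fun s => (1 - (1 - clp s) ^ (k + 1)) / (k + 1)) := by
        simpa [div_eq_mul_inv] using
          ((BM.const 1).sub (b2 (k + 1))).mul (BM.const ((k : ℝ) + 1)⁻¹)
      have := Good.lin hU hD hb (BM.const 1) g1 hone (-(k + 1)) 1
      refine cast ?_ this
      congr 1; ext s; field_simp; ring

/-- A function orthogonal to all powers of `D` is orthogonal to all functions of `D`. -/
lemma orth (hD : BM D) (hmap : μ.map D = lam) {v : Ω → ℝ} (hv : BM v)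
    (h : ∀ k : ℕ, ∫ z, v z * clp (D z) ^ k ∂μ = 0) {f : ℝ → ℝ} (hf : BM f) :
    ∫ z, v z * f (D z) ∂μ = 0 := by
  have hpoly : ∀ p : Polynomial ℝ, ∫ z, v z * p.eval (clp (D z)) ∂μ = 0 := by
    intro p
    have e : ∀ z, v z * p.eval (clp (D z))
        = ∑ i ∈ Finset.range (p.natDegree + 1), p.coeff i * (v z * clp (D z) ^ i) := by
      intro z
      rw [Polynomial.eval_eq_sum_range, Finset.mul_sum]
      refine Finset.sum_congr rfl fun i _ => ?_
      ring
    simp_rw [e]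
    rw [integral_finsetSum]
    · simp [integral_const_mul, h]
    · intro i _
      exact ((BM.const _).mul (hv.mul ((clp_bm.comp hD.1).pow i))).integrable _
  obtain ⟨hvm, C, hC⟩ := hv
  have hv : BM v := ⟨hvm, C, hC⟩
  have hC0 : 0 ≤ C := by
    have : Nonempty Ω := nonempty_of_isProbabilityMeasure μ
    exact (abs_nonneg _).trans (hC (Classical.arbitrary Ω))
  have hbound : ∀ ε > 0, |∫ z, v z * f (D z) ∂μ| ≤ C * (2 * ε) := by
    intro ε hε
    obtain ⟨g, -, hg1, hg2, hg3⟩ :=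
      (hf.integrable lam).exists_hasCompactSupport_integral_sub_le hε
    obtain ⟨p, hp⟩ := exists_polynomial_near_of_continuousOn 0 1 g hg2.continuousOn ε hε
    have hq : BM (fun s => p.eval (clp s)) := by
      obtain ⟨B, hB⟩ := (isCompact_Icc (a := (0 : ℝ)) (b := 1)).exists_bound_of_continuousOn
        p.continuous.continuousOn
      exact ⟨p.continuous.measurable.comp clp_cont.measurable, B, fun s => hB _ (clp_mem s)⟩
    have hdiff : BM (fun s => f s - p.eval (clp s)) := hf.sub hq
    have habs : BM (fun s => |f s - p.eval (clp s)|) := by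
      obtain ⟨B, hB⟩ := hdiff.2
      exact ⟨hdiff.1.abs, B, fun s => by simpa using hB s⟩
    have e1 : ∫ z, v z * f (D z) ∂μ = ∫ z, v z * (f (D z) - p.eval (clp (D z))) ∂μ := by
      simp_rw [mul_sub]
      rw [integral_sub, hpoly, sub_zero]
      · exact (hv.mul (hf.comp hD.1)).integrable _
      · exact (hv.mul (hq.comp hD.1)).integrable _
    have e2 : |∫ z, v z * f (D z) ∂μ| ≤ ∫ z, C * |f (D z) - p.eval (clp (D z))| ∂μ := by
      rw [e1]
      refine (abs_integral_le_integral_abs).trans ?_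
      apply integral_mono
      · exact (hv.mul (hdiff.comp hD.1)).integrable _ |>.abs
      · exact ((BM.const C).mul (habs.comp hD.1)).integrable _
      · intro z
        simp only
        rw [abs_mul]
        exact mul_le_mul_of_nonneg_right (hC z) (abs_nonneg _)
    refine e2.trans ?_
    rw [integral_const_mul, push hD hmap (fun s => |f s - p.eval (clp s)|) habs.1]
    apply mul_le_mul_of_nonneg_left _ hC0
    calc ∫ s, |f s - p.eval (clp s)| ∂lam ≤ ∫ s, (‖f s - g s‖ + ε) ∂lam := by
          apply integral_mono_ae (habs.integrable _)
          · exact (((hf.integrable lam).sub hg3).norm).add (integrable_const _)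
          · filter_upwards [lam_mem] with s hs
            rw [clp_eq hs]
            have h1 := hp s hs
            have h2 : f s - p.eval s = (f s - g s) - (p.eval s - g s) := by ring
            rw [h2]
            refine (abs_sub _ _).trans ?_
            simp only [Real.norm_eq_abs]
            linarith
      _ = ∫ s, ‖f s - g s‖ ∂lam + ε := by
          have i := ((hf.integrable lam).sub hg3).norm
          simp only [Pi.sub_apply] at i
          rw [integral_add i (integrable_const _)]
          simp
      _ ≤ 2 * ε := by linarith
  by_contra hne
  have hpos : 0 < |∫ z, v z * f (D z) ∂μ| := abs_pos.2 hne
  set A := |∫ z, v z * f (D z) ∂μ|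
  have hC1 : 0 < C + 1 := by linarith
  have := hbound (A / (4 * (C + 1))) (by positivity)
  have h3 : C * (2 * (A / (4 * (C + 1)))) = (C / (C + 1)) * (A / 2) := by field_simp; norm_num
  have h4 : C / (C + 1) ≤ 1 := by rw [div_le_one hC1]; linarith
  nlinarith

lemma stage2 (hU : BM (Function.uncurry U)) (hs : ∀ x y, U x y = U y x) (hD : BM D)
    (hmap : μ.map D = lam) (hdeg : ∀ x, D x = ∫ z, U x z ∂μ)
    (hc : ∀ᵐ p ∂(μ.prod μ), ∫ z, U p.1 z * U z p.2 ∂μ = min (D p.1) (D p.2)) :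
    ∀ᵐ p ∂(μ.prod μ), U p.1 p.2 = KK (D p.1) (D p.2) := by
  have hK : BM (Function.uncurry fun x y => KK (D x) (D y)) :=
    KK_bm.comp (g := fun p : Ω × Ω => (D p.1, D p.2))
      ((hD.1.comp measurable_fst).prodMk (hD.1.comp measurable_snd))
  have hV : BM (Function.uncurry fun x y => U x y - KK (D x) (D y)) := hU.sub hK
  have hp := fun k => (Good.powers hU hD hmap hdeg hc k).1
  have hDm := D_mem hD hmap
  have hKK : ∀ x y, D x ∈ Set.Icc (0 : ℝ) 1 → D y ∈ Set.Icc (0 : ℝ) 1 →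
      ∫ z, KK (D x) (D z) * KK (D z) (D y) ∂μ = min (D x) (D y) := by
    intro x y hx hy
    rw [push hD hmap (fun t => KK (D x) t * KK t (D y))
      ((KK_bm.left _).mul (KK_bm.right _)).1, KK_comp hx hy]
  have hUK : ∀ᵐ x ∂μ, ∀ y, D y ∈ Set.Icc (0 : ℝ) 1 →
      ∫ z, U x z * KK (D z) (D y) ∂μ = min (D x) (D y) := by
    filter_upwards [ae_all_iff.2 hp, hDm] with x hx hxm y hy
    have h0 := orth hD hmap (hV.left x) (f := fun s => KK s (D y)) ?_ (KK_bm.right _)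
    · simp only [sub_mul] at h0
      rw [integral_sub, hKK x y hxm hy] at h0
      · linarith
      · exact ((hU.left x).mul (hK.right y)).integrable _
      · exact ((hK.left x).mul (hK.right y)).integrable _
    · intro k
      have b := clp_bm.pow k
      simp only [sub_mul]
      rw [integral_sub, hx k, push hD hmap (fun s => KK (D x) s * clp s ^ k)
        ((KK_bm.left _).mul b).1, sub_self]
      · exact ((hU.left x).mul (b.comp hD.1)).integrable _
      · exact ((hK.left x).mul (b.comp hD.1)).integrable _
  have hz : ∀ᵐ p ∂(μ.prod μ), U p.1 p.2 - KK (D p.1) (D p.2) = 0 := by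
    apply sq_zero hV
    · intro x y; rw [hs x y, KK_symm]
    · have q1 := Measure.quasiMeasurePreserving_fst (μ := μ) (ν := μ)
      have q2 := Measure.quasiMeasurePreserving_snd (μ := μ) (ν := μ)
      filter_upwards [hc, q1.ae hUK, q2.ae hUK, q1.ae hDm, q2.ae hDm] with p h1 h2 h3 h4 h5
      have e : ∀ z, (U p.1 z - KK (D p.1) (D z)) * (U z p.2 - KK (D z) (D p.2))
          = (U p.1 z * U z p.2 - U p.1 z * KK (D z) (D p.2))
            - (U p.2 z * KK (D z) (D p.1) - KK (D p.1) (D z) * KK (D z) (D p.2)) := by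
        intro z
        rw [hs p.2 z, KK_symm (D z) (D p.1)]; ring
      simp_rw [e]
      have i1 := ((hU.left p.1).mul (hU.right p.2)).integrable μ
      have i2 := ((hU.left p.1).mul (hK.right p.2)).integrable μ
      have i3 := ((hU.left p.2).mul (hK.right p.1)).integrable μ
      have i4 := ((hK.left p.1).mul (hK.right p.2)).integrable μ
      have j1 := i1.sub i2
      have j2 := i3.sub i4
      simp only [Pi.sub_def] at j1 j2
      rw [integral_sub j1 j2, integral_sub i1 i2, integral_sub i3 i4, h1,
        h2 _ h5, h3 _ h4, hKK _ _ h4 h5, min_comm (D p.2)]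
      ring
  filter_upwards [hz] with p hp
  linarith

end stage2

lemma cube_restrict (n : ℕ) :
    (volume : Measure (Fin n → ℝ)).restrict (cube n) = Measure.pi (fun _ : Fin n => lam) := by
  rw [cube, volume_pi, Measure.restrict_pi_pi]; rfl

lemma homDensity_eq {n : ℕ} (F : SimpleGraph (Fin n)) (W : ℝ → ℝ → ℝ) :
    homDensity F W = ∫ x, ∏ p ∈ Finset.univ.filter
      (fun p : Fin n × Fin n => p.1 < p.2 ∧ F.Adj p.1 p.2), W (x p.1) (x p.2)
      ∂(Measure.pi (fun _ : Fin n => lam)) := by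
  rw [homDensity, cube_restrict]

lemma BM.edge {U : ℝ → ℝ → ℝ} (hU : BM (Function.uncurry U)) {n : ℕ} (i j : Fin n) :
    BM (fun x : Fin n → ℝ => U (x i) (x j)) :=
  hU.comp (g := fun x : Fin n → ℝ => (x i, x j)) (by fun_prop)

/-- Densities of signed graphs are determined by homomorphism densities. -/
lemma poly_eq {n : ℕ} {U W : ℝ → ℝ → ℝ} (hU : BM (Function.uncurry U))
    (hW : BM (Function.uncurry W)) (h : ∀ F : SimpleGraph (Fin n), homDensity F U = homDensity F W)
    (S : Finset (Fin n × Fin n)) (hS : ∀ p ∈ S, p.1 < p.2) (ε : Fin n × Fin n → ℝ) :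
    ∫ x, ∏ p ∈ S, (U (x p.1) (x p.2) + ε p) ∂(Measure.pi (fun _ : Fin n => lam))
    = ∫ x, ∏ p ∈ S, (W (x p.1) (x p.2) + ε p) ∂(Measure.pi (fun _ : Fin n => lam)) := by
  have key : ∀ V : ℝ → ℝ → ℝ, BM (Function.uncurry V) →
      ∫ x, ∏ p ∈ S, (V (x p.1) (x p.2) + ε p) ∂(Measure.pi (fun _ : Fin n => lam))
      = ∑ T ∈ S.powerset, (∫ x, ∏ p ∈ T, V (x p.1) (x p.2)
          ∂(Measure.pi (fun _ : Fin n => lam))) * ∏ p ∈ S \ T, ε p := by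
    intro V hV
    simp_rw [Finset.prod_add]
    rw [integral_finsetSum]
    · simp_rw [integral_mul_const]
    · intro T _
      exact ((BM.prod T fun p : Fin n × Fin n => hV.edge p.1 p.2).integrable _).mul_const _
  rw [key U hU, key W hW]
  refine Finset.sum_congr rfl fun T hT => ?_
  congr 1
  have hT' : ∀ p ∈ T, p.1 < p.2 := fun p hp => hS p (Finset.mem_powerset.1 hT hp)
  let F : SimpleGraph (Fin n) :=
    { Adj := fun i j => (i, j) ∈ T ∨ (j, i) ∈ T
      symm := ⟨fun i j hij => hij.symm⟩
      loopless := ⟨fun i hi => by rcases hi with hi | hi <;> exact lt_irrefl _ (hT' _ hi)⟩ }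
  have hF : ∀ inst : DecidablePred fun p : Fin n × Fin n => p.1 < p.2 ∧ F.Adj p.1 p.2,
      @Finset.filter _ (fun p : Fin n × Fin n => p.1 < p.2 ∧ F.Adj p.1 p.2) inst Finset.univ = T := by
    intro _
    ext p
    simp only [Finset.mem_filter, Finset.mem_univ, true_and]
    constructor
    · rintro ⟨h1, h2 | h2⟩
      · exact h2
      · exact absurd (hT' _ h2) (not_lt_of_gt h1)
    · intro hp
      exact ⟨hT' p hp, Or.inl hp⟩
  have := h F
  rw [homDensity_eq, homDensity_eq, hF] at this
  exact this

lemma pi_succ {n : ℕ} (f : (Fin (n + 1) → ℝ) → ℝ) (hf : BM f) :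
    ∫ x, f x ∂(Measure.pi (fun _ : Fin (n + 1) => lam))
      = ∫ a, ∫ v, f (Fin.cons a v) ∂(Measure.pi (fun _ : Fin n => lam)) ∂lam := by
  have hmp := measurePreserving_piFinSuccAbove (fun _ : Fin (n + 1) => lam) 0
  have h2 := hmp.symm
  rw [← h2.integral_comp' (g := f)]
  rw [integral_prod]
  · have e : ∀ (a : ℝ) (v : Fin n → ℝ),
        (MeasurableEquiv.piFinSuccAbove (fun _ : Fin (n + 1) => ℝ) 0).symm (a, v)
          = Fin.cons a v := by
      intro a v
      exact Fin.insertNth_zero' a v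
    exact integral_congr_ae (Filter.Eventually.of_forall fun a =>
      integral_congr_ae (Filter.Eventually.of_forall fun v => congrArg f (e a v)))
  · exact (hf.comp (MeasurableEquiv.piFinSuccAbove (fun _ : Fin (n + 1) => ℝ) 0).symm.measurable).integrable _

/-- The first two moments of the degree and the nestedness functional. -/
def Cond (U : ℝ → ℝ → ℝ) : Prop :=
  ∫ x, (∫ z, U x z ∂lam) ∂lam = 1 / 2 ∧
  ∫ x, (∫ z, U x z ∂lam) ^ 2 ∂lam = 1 / 3 ∧
  ∫ x, ∫ y, ((∫ z, U x z * (U y z + -1) ∂lam) * (∫ z, (U x z + -1) * U y z ∂lam)) ^ 2 ∂lam ∂lam = 0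

lemma form1 {U : ℝ → ℝ → ℝ} (hU : BM (Function.uncurry U)) :
    ∫ x, ∏ p ∈ ({(0, 1)} : Finset (Fin 2 × Fin 2)), (U (x p.1) (x p.2) + (0 : ℝ))
      ∂(Measure.pi (fun _ : Fin 2 => lam)) = ∫ x, (∫ z, U x z ∂lam) ∂lam := by
  simp only [Finset.prod_singleton, add_zero]
  rw [pi_succ _ (hU.edge 0 1)]
  congr 1
  ext a
  have := integral_fintype_prod_eq_prod (𝕜 := ℝ) (fun (_ : Fin 1) z => U a z) (μ := fun _ => lam)
  simp only [Fin.prod_univ_one] at this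
  rw [← this]
  rfl

lemma form2 {U : ℝ → ℝ → ℝ} (hU : BM (Function.uncurry U)) :
    ∫ x, ∏ p ∈ ({(0, 1), (0, 2)} : Finset (Fin 3 × Fin 3)), (U (x p.1) (x p.2) + (0 : ℝ))
      ∂(Measure.pi (fun _ : Fin 3 => lam)) = ∫ x, (∫ z, U x z ∂lam) ^ 2 ∂lam := by
  have e : ∀ x : Fin 3 → ℝ, ∏ p ∈ ({(0, 1), (0, 2)} : Finset (Fin 3 × Fin 3)),
      (U (x p.1) (x p.2) + (0 : ℝ)) = U (x 0) (x 1) * U (x 0) (x 2) := by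
    intro x
    rw [Finset.prod_insert (by decide), Finset.prod_singleton]; simp
  simp_rw [e]
  rw [pi_succ _ ((hU.edge 0 1).mul (hU.edge 0 2))]
  congr 1
  ext a
  have := integral_fintype_prod_eq_prod (𝕜 := ℝ) (fun (_ : Fin 2) z => U a z) (μ := fun _ => lam)
  simp only [Fin.prod_univ_two] at this
  rw [sq, ← this]
  rfl

/-- Edges of the bipartite graph on `2 + 4` vertices. -/
def SS : Finset (Fin 6 × Fin 6) :=
  {(0, 2), (1, 2), (0, 3), (1, 3), (0, 4), (1, 4), (0, 5), (1, 5)}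

/-- Signs. -/
def eps (p : Fin 6 × Fin 6) : ℝ :=
  if p = (1, 2) ∨ p = (0, 3) ∨ p = (1, 4) ∨ p = (0, 5) then -1 else 0

lemma form3 {U : ℝ → ℝ → ℝ} (hU : BM (Function.uncurry U)) :
    ∫ x, ∏ p ∈ SS, (U (x p.1) (x p.2) + eps p) ∂(Measure.pi (fun _ : Fin 6 => lam))
    = ∫ x, ∫ y, ((∫ z, U x z * (U y z + -1) ∂lam) * (∫ z, (U x z + -1) * U y z ∂lam)) ^ 2
        ∂lam ∂lam := by
  have hb : BM (fun x : Fin 6 → ℝ => ∏ p ∈ SS, (U (x p.1) (x p.2) + eps p)) :=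
    BM.prod SS fun p => (hU.edge p.1 p.2).add (BM.const _)
  have e : ∀ x : Fin 6 → ℝ, ∏ p ∈ SS, (U (x p.1) (x p.2) + eps p)
      = (U (x 0) (x 2) * (U (x 1) (x 2) + -1)) * ((U (x 0) (x 3) + -1) * U (x 1) (x 3))
       * (U (x 0) (x 4) * (U (x 1) (x 4) + -1)) * ((U (x 0) (x 5) + -1) * U (x 1) (x 5)) := by
    intro x
    unfold SS
    rw [Finset.prod_insert (by decide), Finset.prod_insert (by decide),
      Finset.prod_insert (by decide), Finset.prod_insert (by decide),
      Finset.prod_insert (by decide), Finset.prod_insert (by decide),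
      Finset.prod_insert (by decide), Finset.prod_singleton]
    simp [eps]
    ring
  rw [pi_succ _ hb]
  congr 1
  ext a
  have hb2 : BM (fun v : Fin 5 → ℝ => ∏ p ∈ SS,
      (U ((Fin.cons a v : Fin 6 → ℝ) p.1) ((Fin.cons a v : Fin 6 → ℝ) p.2) + eps p)) := by
    refine hb.comp (g := fun v : Fin 5 → ℝ => (Fin.cons a v : Fin 6 → ℝ)) ?_
    rw [measurable_pi_iff]
    intro i
    refine Fin.cases ?_ (fun j => ?_) i
    · simp
    · simpa using measurable_pi_apply j
  rw [pi_succ _ hb2]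
  congr 1
  ext b
  simp_rw [e]
  have := integral_fintype_prod_eq_prod (𝕜 := ℝ)
    (![fun z => U a z * (U b z + -1), fun z => (U a z + -1) * U b z,
      fun z => U a z * (U b z + -1), fun z => (U a z + -1) * U b z] : Fin 4 → ℝ → ℝ)
    (μ := fun _ => lam)
  simp only [Fin.prod_univ_four] at this
  refine Eq.trans ?_ (this.trans ?_)
  · rfl
  · simp; ring

lemma pair_map {n : ℕ} {i j : Fin n} (hij : i ≠ j) :
    (Measure.pi (fun _ : Fin n => lam)).map (fun x => (x i, x j)) = lam.prod lam := by
  have h := ProbabilityTheory.iIndepFun_pi (μ := fun _ : Fin n => lam)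
    (X := fun _ x => x) (fun _ => aemeasurable_id)
  have h2 := h.indepFun hij
  rw [ProbabilityTheory.indepFun_iff_map_prod_eq_prod_map_map
    (measurable_pi_apply i).aemeasurable (measurable_pi_apply j).aemeasurable] at h2
  rw [h2]
  have := fun i => (measurePreserving_eval (fun _ : Fin n => lam) i).map_eq
  exact congrArg₂ Measure.prod (this i) (this j)

lemma cond_hom {U : ℝ → ℝ → ℝ} (hU : BM (Function.uncurry U)) (hs : ∀ x y, U x y = U y x)
    (hC : Cond U) {n : ℕ} (F : SimpleGraph (Fin n)) : homDensity F U = homDensity F KK := by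
  obtain ⟨h1, h2, h3⟩ := hC
  set D : ℝ → ℝ := fun x => ∫ z, U x z ∂lam with hDdef
  have hD : BM D := BM.integral hU lam
  set c : ℝ → ℝ → ℝ := fun x y => ∫ z, U x z * U z y ∂lam with hcdef
  have hc : BM (Function.uncurry c) := by
    refine BM.integral (f := fun (p : ℝ × ℝ) z => U p.1 z * U z p.2) ?_ lam
    exact (hU.comp (g := fun q : (ℝ × ℝ) × ℝ => (q.1.1, q.2)) (by fun_prop)).mul
      (hU.comp (g := fun q : (ℝ × ℝ) × ℝ => (q.2, q.1.2)) (by fun_prop))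
  have hA : ∀ x y, ∫ z, U x z * (U y z + -1) ∂lam = c x y - D x := by
    intro x y
    rw [hcdef, hDdef]
    simp only
    rw [← integral_sub (((hU.left x).mul (hU.right y)).integrable _) ((hU.left x).integrable _)]
    congr 1; ext z; rw [hs y z]; ring
  have hB : ∀ x y, ∫ z, (U x z + -1) * U y z ∂lam = c x y - D y := by
    intro x y
    rw [hcdef, hDdef]
    simp only
    rw [← integral_sub (((hU.left x).mul (hU.right y)).integrable _) ((hU.left y).integrable _)]
    congr 1; ext z; rw [hs y z]; ring
  simp_rw [hA, hB] at h3
  have hprod : BM (Function.uncurry fun x y => ((c x y - D x) * (c x y - D y)) ^ 2) :=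
    ((hc.sub hD.fst).mul (hc.sub hD.snd)).pow 2
  have h3' : ∫ p : ℝ × ℝ, ((c p.1 p.2 - D p.1) * (c p.1 p.2 - D p.2)) ^ 2 ∂(lam.prod lam) = 0 := by
    rw [← h3]; exact integral_prod _ (hprod.integrable _)
  have h4 : ∀ᵐ p ∂(lam.prod lam), min (D p.1) (D p.2) ≤ c p.1 p.2 := by
    have := (integral_eq_zero_iff_of_nonneg (fun p => sq_nonneg _) (hprod.integrable _)).1 h3'
    filter_upwards [this] with p hp
    simp only [Pi.zero_apply] at hp
    have hp := pow_eq_zero_iff (two_ne_zero) |>.1 hp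
    rcases mul_eq_zero.1 hp with h | h
    · exact (min_le_left _ _).trans (by linarith)
    · exact (min_le_right _ _).trans (by linarith)
  have h5 : ∫ x, ∫ y, c x y ∂lam ∂lam = 1 / 3 := by
    have a1 : ∀ x, ∫ y, c x y ∂lam = ∫ z, U x z * D z ∂lam := by
      intro x
      have := fub (hU.left x) hU (BM.const 1) lam lam
      simp only [mul_one] at this
      exact this.symm
    simp_rw [a1]
    have := fub (BM.const 1) hU hD lam lam
    simp only [one_mul] at this
    rw [this, ← h2]
    congr 1; ext z
    have : ∫ t, U t z ∂lam = D z := by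
      rw [hDdef]; congr 1; ext t; exact hs t z
    rw [this]; ring
  obtain ⟨hcm, hN⟩ := stage1 D hD c hc h1 h2 h5 h4
  have hmap := uniform_law D hD hN
  have hmain := stage2 hU hs hD hmap (fun _ => rfl) hcm
  rw [homDensity_eq, homDensity_eq]
  have hpm : (Measure.pi (fun _ : Fin n => lam)).map (fun x i => D (x i))
      = Measure.pi (fun _ : Fin n => lam) := by
    have : IsProbabilityMeasure (lam.map D) := Measure.isProbabilityMeasure_map hD.1.aemeasurable
    rw [Measure.pi_map_pi (f := fun _ => D) (fun _ => hD.1.aemeasurable)]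
    simp_rw [hmap]
  have hall : ∀ᵐ x ∂(Measure.pi (fun _ : Fin n => lam)), ∀ p : Fin n × Fin n, p.1 ≠ p.2 →
      U (x p.1) (x p.2) = KK (D (x p.1)) (D (x p.2)) := by
    rw [ae_all_iff]
    intro p
    by_cases hp : p.1 = p.2
    · simp [hp]
    · have := hmain
      rw [← pair_map hp] at this
      filter_upwards [ae_of_ae_map (by fun_prop) this] with x hx _
      exact hx
  conv_rhs => rw [← hpm]
  rw [integral_map]
  · apply integral_congr_ae
    filter_upwards [hall] with x hx
    refine Finset.prod_congr rfl fun p hp => ?_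
    simp only [Finset.mem_filter] at hp
    exact hx p hp.2.1.ne
  · refine (measurable_pi_iff.2 fun i => ?_).aemeasurable
    exact hD.1.comp (measurable_pi_apply i)
  · exact (BM.prod _ fun p : Fin n × Fin n => KK_bm.edge p.1 p.2).1.aestronglyMeasurable

lemma clamp_hom {U : ℝ → ℝ → ℝ} {n : ℕ} (F : SimpleGraph (Fin n)) :
    homDensity F (fun x y => U (clp x) (clp y)) = homDensity F U := by
  unfold homDensity
  apply setIntegral_congr_fun
  · exact MeasurableSet.univ_pi fun _ => measurableSet_Icc
  · intro x hx
    refine Finset.prod_congr rfl fun p _ => ?_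
    have h : ∀ i, clp (x i) = x i := fun i => clp_eq (hx i (Set.mem_univ i))
    simp only [h]

lemma clamp_bm {U : ℝ → ℝ → ℝ} (hU : memW U) :
    BM (Function.uncurry fun x y => U (clp x) (clp y)) := by
  obtain ⟨hm, -, C, hC⟩ := hU
  refine ⟨hm.comp (g := Function.uncurry U) (f := fun p : ℝ × ℝ => (clp p.1, clp p.2)) ?_, C,
    fun p => hC _ (clp_mem _) _ (clp_mem _)⟩
  exact (clp_cont.measurable.comp measurable_fst).prodMk (clp_cont.measurable.comp measurable_snd)

/-- The half graphon. -/
def Wh (x y : ℝ) : ℝ := if x + y ≤ 1 then 1 else 0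

lemma Wh_bm : BM (Function.uncurry Wh) := by
  have : MeasurableSet {p : ℝ × ℝ | p.1 + p.2 ≤ 1} :=
    measurableSet_le (measurable_fst.add measurable_snd) measurable_const
  exact BM.ite this

lemma Wh_symm (x y : ℝ) : Wh x y = Wh y x := by unfold Wh; rw [add_comm]

lemma Wh_eq (x z : ℝ) : Wh x z = if z ≤ 1 - x then 1 else 0 := by
  unfold Wh; congr 1; rw [le_sub_iff_add_le, add_comm]

lemma Wh_cond : Cond Wh := by
  have hd : ∀ x, ∫ z, Wh x z ∂lam = clp (1 - x) := by
    intro x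
    have := lam_le (1 - x) (fun _ => 1)
    simp only [mul_one, intervalIntegral.integral_const, smul_eq_mul, sub_zero] at this
    simp_rw [Wh_eq]
    exact this
  have hc : ∀ x y, ∫ z, Wh x z * Wh y z ∂lam = min (clp (1 - x)) (clp (1 - y)) := by
    intro x y
    simp_rw [Wh_eq]
    exact lam_min _ _
  have h1x : ∀ᵐ x ∂lam, clp (1 - x) = 1 - x := by
    filter_upwards [lam_mem] with x hx
    exact clp_eq ⟨by linarith [hx.2], by linarith [hx.1]⟩
  refine ⟨?_, ?_, ?_⟩
  · simp_rw [hd]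
    rw [integral_congr_ae h1x, lam_one, intervalIntegral.integral_sub (by simp) (by simp)]
    norm_num
  · simp_rw [hd]
    have : (fun x => clp (1 - x) ^ 2) =ᵐ[lam] fun x => (1 - x) ^ 2 := by
      filter_upwards [h1x] with x hx
      rw [hx]
    rw [integral_congr_ae this, lam_one,
      intervalIntegral.integral_comp_sub_left (fun t => t ^ 2) 1]
    norm_num
  · have e : ∀ x y, (∫ z, Wh x z * (Wh y z + -1) ∂lam) * (∫ z, (Wh x z + -1) * Wh y z ∂lam) = 0 := by
      intro x y
      have i := ((Wh_bm.left x).mul (Wh_bm.left y)).integrable lam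
      have e1 : ∀ z, Wh x z * (Wh y z + -1) = Wh x z * Wh y z - Wh x z := fun z => by ring
      have e2 : ∀ z, (Wh x z + -1) * Wh y z = Wh x z * Wh y z - Wh y z := fun z => by ring
      simp_rw [e1, e2]
      rw [integral_sub i ((Wh_bm.left x).integrable _),
        integral_sub i ((Wh_bm.left y).integrable _), hc, hd, hd]
      rcases min_choice (clp (1 - x)) (clp (1 - y)) with h | h <;> simp [h]
    simp_rw [e]
    simp

lemma Wh_mem : memW Wh :=
  ⟨Wh_bm.1, fun x _ y _ => Wh_symm x y, by
    obtain ⟨C, hC⟩ := Wh_bm.2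
    exact ⟨C, fun x _ y _ => hC (x, y)⟩⟩

/-- the half-graphon `W_h(x,y) = 1_{x+y ≤ 1}` is finitely forcible in `𝒲`. -/
theorem statement8 :
    FinitelyForcible memW (fun x y => if x + y ≤ 1 then (1 : ℝ) else 0) := by
  change FinitelyForcible memW Wh
  refine ⟨Wh_mem, ?_⟩
  let T := Σ n : Fin 7, SimpleGraph (Fin n)
  let e := Finite.equivFin T
  refine ⟨Nat.card T, fun i => (e.symm i).1, fun i => (e.symm i).2, ?_⟩
  intro U hU h n F
  have hall : ∀ (m : Fin 7) (G : SimpleGraph (Fin m)), homDensity G U = homDensity G Wh := by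
    intro m G
    have := h (e ⟨m, G⟩)
    simp only [Equiv.symm_apply_apply] at this
    rw [Equiv.symm_apply_apply] at this
    exact this
  have hbm := clamp_bm hU
  have hsym : ∀ x y, U (clp x) (clp y) = U (clp y) (clp x) :=
    fun x y => hU.2.1 _ (clp_mem x) _ (clp_mem y)
  have hall' : ∀ (m : Fin 7) (G : SimpleGraph (Fin m)),
      homDensity G (fun x y => U (clp x) (clp y)) = homDensity G Wh := by
    intro m G
    rw [clamp_hom]; exact hall m G
  have hcond : Cond (fun x y => U (clp x) (clp y)) := by
    obtain ⟨c1, c2, c3⟩ := Wh_cond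
    refine ⟨?_, ?_, ?_⟩
    · rw [← c1, ← form1 Wh_bm, ← form1 hbm]
      exact poly_eq hbm Wh_bm (hall' 2) _ (by decide) (fun _ => 0)
    · rw [← c2, ← form2 Wh_bm, ← form2 hbm]
      exact poly_eq hbm Wh_bm (hall' 3) _ (by decide) (fun _ => 0)
    · rw [← c3, ← form3 Wh_bm, ← form3 hbm]
      exact poly_eq hbm Wh_bm (hall' 6) _ (by unfold SS; decide) eps
  rw [← clamp_hom F, cond_hom hbm hsym hcond F, cond_hom Wh_bm Wh_symm Wh_cond F]
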